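/- (Key Fact) Let G be a set of labeled polynomials (each h^[w] ∈ G satisfies h = w·f⃗). Let f^[u] and g^[v] be labeled polynomials with u ≠ 0, v ≠ 0, and s(u) = s(v), and suppose neither f^[u] nor g^[v] is reducible by G. Assume further (Condition 2) that for every labeled polynomial f̄^[ū] (f̄ = ū·f⃗) with f̄ ≠ 0 and s(ū) ≺₂ s(u), there exists h^[w] ∈ G with h ≠ 0, lpp(h) dividing lpp(f̄), and s(x^t w) ⪯₂ s(ū), where x^t = lpp(f̄)/lpp(h). Then lpp(f) = lpp(g); in particular f = 0 if and only if g = 0, and if both are nonzero they have the same leading power product. -/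

import Mathlib

open MvPolynomial

noncomputable section

variable {k : Type*} [Field k] {m n : ℕ}

/-- The leading power product of a polynomial, w.r.t. the monomial order `L1`;
`⊥` for the zero polynomial. -/
def lpp (L1 : LinearOrder (Fin n →₀ ℕ)) (f : MvPolynomial (Fin n) k) :
    WithBot (Fin n →₀ ℕ) :=
  @Finset.max _ L1 f.support

/-- The leading coefficient of a polynomial w.r.t. the monomial order `L1`. -/
def plc (L1 : LinearOrder (Fin n →₀ ℕ)) (f : MvPolynomial (Fin n) k) : k :=
  WithBot.recBotCoe 0 (fun α => MvPolynomial.coeff α f) (lpp L1 f)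

/-- The support of a module element `u ∈ R^m`, as a set of module monomials `(i, α)`. -/
def msupport (u : Fin m → MvPolynomial (Fin n) k) : Finset (Fin m × (Fin n →₀ ℕ)) :=
  Finset.univ.biUnion fun i => (u i).support.image fun α => (i, α)

/-- The signature of a module element, w.r.t. the module term order `L2`;
`⊥` for the zero element. -/
def sig (L2 : LinearOrder (Fin m × (Fin n →₀ ℕ))) (u : Fin m → MvPolynomial (Fin n) k) :
    WithBot (Fin m × (Fin n →₀ ℕ)) :=
  @Finset.max _ L2 (msupport u)

/-- The leading coefficient of a module element (the coefficient at its signature). -/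
def mlc (L2 : LinearOrder (Fin m × (Fin n →₀ ℕ))) (u : Fin m → MvPolynomial (Fin n) k) : k :=
  WithBot.recBotCoe 0 (fun p => MvPolynomial.coeff p.2 (u p.1)) (sig L2 u)

/-- The strict order on `WithBot β` induced by a linear order `L` on `β`
(`⊥` smaller than everything). -/
def bslt {β : Type*} (L : LinearOrder β) (a b : WithBot β) : Prop :=
  WithBot.recBotCoe False (fun y => WithBot.recBotCoe True (fun x => L.lt x y) a) b

/-- The order on `WithBot β` induced by a linear order `L` on `β`. -/
def bsle {β : Type*} (L : LinearOrder β) (a b : WithBot β) : Prop :=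
  WithBot.recBotCoe (a = ⊥) (fun y => WithBot.recBotCoe True (fun x => L.le x y) a) b

/-- Multiplication of a module element by the monomial `x^t`. -/
def tsmul (t : Fin n →₀ ℕ) (u : Fin m → MvPolynomial (Fin n) k) :
    Fin m → MvPolynomial (Fin n) k :=
  fun i => monomial t (1 : k) * u i

/-- `u ⬝ f⃗ = u₁ f₁ + ⋯ + u_m f_m`. -/
def dotf (fvec u : Fin m → MvPolynomial (Fin n) k) : MvPolynomial (Fin n) k :=
  ∑ i, u i * fvec i

/-- The least common multiple of two monomials (componentwise max of exponents). -/
def mlcm (α β : Fin n →₀ ℕ) : Fin n →₀ ℕ :=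
  Finsupp.zipWith max (max_self 0) α β

/-- `G` is a labeled Gröbner basis of `(f₁, …, f_m)`. -/
def IsLabeledGB (L1 : LinearOrder (Fin n →₀ ℕ)) (L2 : LinearOrder (Fin m × (Fin n →₀ ℕ)))
    (fvec : Fin m → MvPolynomial (Fin n) k)
    (G : Set (MvPolynomial (Fin n) k × (Fin m → MvPolynomial (Fin n) k))) : Prop :=
  ∀ (f : MvPolynomial (Fin n) k) (u : Fin m → MvPolynomial (Fin n) k),
    f = dotf fvec u → f ≠ 0 →
      ∃ gv ∈ G, gv.1 ≠ 0 ∧ ∃ t : Fin n →₀ ℕ,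
        WithBot.map (fun β => t + β) (lpp L1 gv.1) = lpp L1 f ∧
        bsle L2 (sig L2 (tsmul t gv.2)) (sig L2 u)

/-- `f^[u]` has a standard representation w.r.t. the set `B` of labeled polynomials. -/
def HasStdRep (L1 : LinearOrder (Fin n →₀ ℕ)) (L2 : LinearOrder (Fin m × (Fin n →₀ ℕ)))
    (B : Set (MvPolynomial (Fin n) k × (Fin m → MvPolynomial (Fin n) k)))
    (f : MvPolynomial (Fin n) k) (u : Fin m → MvPolynomial (Fin n) k) : Prop :=
  ∃ (N : ℕ) (p : Fin N → MvPolynomial (Fin n) k)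
      (g : Fin N → MvPolynomial (Fin n) k × (Fin m → MvPolynomial (Fin n) k)),
    (∀ i, g i ∈ B) ∧ f = ∑ i, p i * (g i).1 ∧
    (∀ i, bsle L1 (lpp L1 (p i * (g i).1)) (lpp L1 f)) ∧
    (∀ i, bsle L2 (sig L2 (fun j => p i * (g i).2 j)) (sig L2 u))

/-- The polynomial part of the S-polynomial of the critical pair `(x^tg, gv, x^th, hw)`. -/
def spolyP (L1 : LinearOrder (Fin n →₀ ℕ))
    (gv hw : MvPolynomial (Fin n) k × (Fin m → MvPolynomial (Fin n) k))
    (tg th : Fin n →₀ ℕ) : MvPolynomial (Fin n) k :=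
  monomial tg (1 : k) * gv.1 - C (plc L1 gv.1 / plc L1 hw.1) * (monomial th (1 : k) * hw.1)

/-- The module part of the S-polynomial of the critical pair `(x^tg, gv, x^th, hw)`. -/
def spolyV (L1 : LinearOrder (Fin n →₀ ℕ))
    (gv hw : MvPolynomial (Fin n) k × (Fin m → MvPolynomial (Fin n) k))
    (tg th : Fin n →₀ ℕ) : Fin m → MvPolynomial (Fin n) k :=
  fun j =>
    monomial tg (1 : k) * gv.2 j - C (plc L1 gv.1 / plc L1 hw.1) * (monomial th (1 : k) * hw.2 j)

/-- `f^[u]` is reducible (in one step, by a one-side-reduction) by the set `G`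
of labeled polynomials. -/
def Reducible (L1 : LinearOrder (Fin n →₀ ℕ)) (L2 : LinearOrder (Fin m × (Fin n →₀ ℕ)))
    (G : Set (MvPolynomial (Fin n) k × (Fin m → MvPolynomial (Fin n) k)))
    (f : MvPolynomial (Fin n) k) (u : Fin m → MvPolynomial (Fin n) k) : Prop :=
  f ≠ 0 ∧ ∃ hw ∈ G, hw.1 ≠ 0 ∧ ∃ t : Fin n →₀ ℕ,
    WithBot.map (fun β => t + β) (lpp L1 hw.1) = lpp L1 f ∧
    bslt L2 (sig L2 (tsmul t hw.2)) (sig L2 u)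

/-- `x^t ⬝ fu` is generalized rewritable by the finite set `B` (w.r.t. the strict partial
order `r` on labeled polynomials). -/
def GenRewritable (L2 : LinearOrder (Fin m × (Fin n →₀ ℕ)))
    (B : Finset (MvPolynomial (Fin n) k × (Fin m → MvPolynomial (Fin n) k)))
    (r : (MvPolynomial (Fin n) k × (Fin m → MvPolynomial (Fin n) k)) →
         (MvPolynomial (Fin n) k × (Fin m → MvPolynomial (Fin n) k)) → Prop)
    (t : Fin n →₀ ℕ)
    (fu : MvPolynomial (Fin n) k × (Fin m → MvPolynomial (Fin n) k)) : Prop :=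
  ∃ gv ∈ B, gv.2 ≠ 0 ∧
    (∃ pq qq : Fin m × (Fin n →₀ ℕ), sig L2 gv.2 = ↑pq ∧ sig L2 fu.2 = ↑qq ∧
      pq.1 = qq.1 ∧ ∃ γ : Fin n →₀ ℕ, pq.2 + γ = t + qq.2) ∧
    r gv fu

/-- The position-over-term module order: `(i, α) ≺ (j, β)` iff `i > j`,
or `i = j` and `α ≺₁ β`. -/
def potLT (L1 : LinearOrder (Fin n →₀ ℕ)) (p q : Fin m × (Fin n →₀ ℕ)) : Prop :=
  q.1 < p.1 ∨ (p.1 = q.1 ∧ L1.lt p.2 q.2)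

/-- `p` is the signature of the module element `w` w.r.t. the linear order `lt`
on module monomials. -/
def IsSigWrt (lt : (Fin m × (Fin n →₀ ℕ)) → (Fin m × (Fin n →₀ ℕ)) → Prop)
    (w : Fin m → MvPolynomial (Fin n) k) (p : Fin m × (Fin n →₀ ℕ)) : Prop :=
  p ∈ msupport w ∧ ∀ q ∈ msupport w, q ≠ p → lt q p

end

/-!
Suppose `lpp g ≺₁ lpp f` and put `c = lc u / lc v`. Subtracting `c g` from `f` does not touch the
leading power product of `f`, but in the labels the leading terms of `u` and `c v` cancel, so
`u - c v` has a signature strictly below that of `u`. An element of `G` covering `f - c g` in the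
sense of Condition 2 therefore reduces `f^[u]`. The situation is symmetric in `f` and `g`.
-/

section InducedOrder

variable {β : Type*}

theorem bslt_iff_lt [L : LinearOrder β] {a b : WithBot β} : bslt L a b ↔ a < b := by
  cases b <;> cases a <;> simp [bslt]

theorem bsle_iff_le [L : LinearOrder β] {a b : WithBot β} : bsle L a b ↔ a ≤ b := by
  cases b <;> cases a <;> simp [bsle]

theorem bsle.trans_bslt {L : LinearOrder β} {a b c : WithBot β}
    (hab : bsle L a b) (hbc : bslt L b c) : bslt L a c :=
  bslt_iff_lt.2 ((bsle_iff_le.1 hab).trans_lt (bslt_iff_lt.1 hbc))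

theorem bslt.ne_bot {L : LinearOrder β} {a b : WithBot β} (h : bslt L a b) : b ≠ ⊥ :=
  (bslt_iff_lt.1 h).ne_bot

theorem bslt_trichotomy (L : LinearOrder β) (a b : WithBot β) :
    bslt L a b ∨ a = b ∨ bslt L b a := by
  simpa only [bslt_iff_lt] using lt_trichotomy a b

end InducedOrder

section SupportMax

theorem max_support_sub_eq_left {R A : Type*} [Ring R] [LinearOrder A] [AddZeroClass A]
    {f g : AddMonoidAlgebra R A} (h : g.coeff.support.max < f.coeff.support.max) :
    (f - g).coeff.support.max = f.coeff.support.max := by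
  rw [sub_eq_add_neg]
  refine AddMonoidAlgebra.supDegree_add_eq_left (D := WithBot.some) ?_
  rwa [AddMonoidAlgebra.supDegree_neg]

theorem max_lt_coe_of_max_eq_of_notMem {β : Type*} [LinearOrder β] {s t d : Finset β} {b : β}
    (hs : s.max = b) (ht : t.max = b) (hd : ∀ x ∈ d, x ∈ s ∨ x ∈ t) (hb : b ∉ d) :
    d.max < b := by
  have hle : d.max ≤ b := Finset.max_le fun x hx ↦
    (hd x hx).elim (fun hxs ↦ hs ▸ Finset.le_max hxs) (fun hxt ↦ ht ▸ Finset.le_max hxt)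
  exact hle.lt_of_ne fun h ↦ hb (Finset.mem_of_max h)

end SupportMax

section LeadingPowerProduct

variable {k : Type*} [Field k] {n : ℕ} (L1 : LinearOrder (Fin n →₀ ℕ))
  {f g : MvPolynomial (Fin n) k}

theorem lpp_eq_bot_iff : lpp L1 f = ⊥ ↔ f = 0 := by
  rw [lpp, @Finset.max_eq_bot _ L1, support_eq_empty]

theorem lpp_smul {c : k} (hc : c ≠ 0) (f : MvPolynomial (Fin n) k) :
    lpp L1 (c • f) = lpp L1 f := by
  rw [lpp, lpp, support_smul_eq hc]

theorem lpp_sub_eq_left (h : bslt L1 (lpp L1 g) (lpp L1 f)) : lpp L1 (f - g) = lpp L1 f :=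
  @max_support_sub_eq_left _ _ _ L1 _ _ _ (bslt_iff_lt.1 h)

end LeadingPowerProduct

section Signature

variable {k : Type*} [Field k] {m n : ℕ} {u v : Fin m → MvPolynomial (Fin n) k}

theorem mem_msupport {p : Fin m × (Fin n →₀ ℕ)} : p ∈ msupport u ↔ coeff p.2 (u p.1) ≠ 0 := by
  obtain ⟨i, α⟩ := p
  simp [msupport]

theorem msupport_eq_empty : msupport u = ∅ ↔ u = 0 := by
  simp [Finset.eq_empty_iff_forall_notMem, mem_msupport, funext_iff, MvPolynomial.ext_iff]

theorem msupport_smul {c : k} (hc : c ≠ 0) (u : Fin m → MvPolynomial (Fin n) k) :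
    msupport (c • u) = msupport u := by
  ext p
  simp [mem_msupport, hc]

theorem mem_or_mem_of_mem_msupport_sub {p : Fin m × (Fin n →₀ ℕ)}
    (hp : p ∈ msupport (u - v)) : p ∈ msupport u ∨ p ∈ msupport v := by
  simp only [mem_msupport, Pi.sub_apply, coeff_sub] at hp ⊢
  by_contra! h
  exact hp (by rw [h.1, h.2, sub_zero])

variable (L2 : LinearOrder (Fin m × (Fin n →₀ ℕ)))

theorem sig_eq_bot_iff : sig L2 u = ⊥ ↔ u = 0 := by
  rw [sig, @Finset.max_eq_bot _ L2, msupport_eq_empty]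

theorem exists_sig_eq_coe (hu : u ≠ 0) : ∃ p : Fin m × (Fin n →₀ ℕ), sig L2 u = p := by
  obtain ⟨p, hp⟩ := WithBot.ne_bot_iff_exists.1 (mt (sig_eq_bot_iff L2).1 hu)
  exact ⟨p, hp.symm⟩

theorem sig_smul {c : k} (hc : c ≠ 0) (u : Fin m → MvPolynomial (Fin n) k) :
    sig L2 (c • u) = sig L2 u := by
  rw [sig, sig, msupport_smul hc]

variable {L2}

theorem mlc_eq_coeff {p : Fin m × (Fin n →₀ ℕ)} (hp : sig L2 u = p) :
    mlc L2 u = coeff p.2 (u p.1) := by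
  rw [mlc, hp, WithBot.recBotCoe_coe]

theorem mlc_ne_zero (hu : u ≠ 0) : mlc L2 u ≠ 0 := by
  obtain ⟨p, hp⟩ := exists_sig_eq_coe L2 hu
  rw [mlc_eq_coeff hp]
  exact mem_msupport.1 (@Finset.mem_of_max _ L2 _ _ hp)

theorem mlc_smul {c : k} (hc : c ≠ 0) (u : Fin m → MvPolynomial (Fin n) k) :
    mlc L2 (c • u) = c * mlc L2 u := by
  rw [mlc, mlc, sig_smul L2 hc]
  cases sig L2 u <;> simp

theorem sig_sub_lt_of_mlc_eq (hu : u ≠ 0) (hsig : sig L2 u = sig L2 v)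
    (hmlc : mlc L2 u = mlc L2 v) : bslt L2 (sig L2 (u - v)) (sig L2 u) := by
  obtain ⟨p, hp⟩ := exists_sig_eq_coe L2 hu
  have hpv : sig L2 v = p := hsig.symm.trans hp
  have hcancel : p ∉ msupport (u - v) := by
    rw [mem_msupport, not_not, Pi.sub_apply, coeff_sub, ← mlc_eq_coeff hp, ← mlc_eq_coeff hpv,
      hmlc, sub_self]
  rw [hp]
  exact bslt_iff_lt.2 (@max_lt_coe_of_max_eq_of_notMem _ L2 _ _ _ _ hp hpv
    (fun _ ↦ mem_or_mem_of_mem_msupport_sub) hcancel)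

theorem sig_sub_smul_lt (hu : u ≠ 0) (hv : v ≠ 0) (hsig : sig L2 u = sig L2 v) :
    bslt L2 (sig L2 (u - (mlc L2 u / mlc L2 v) • v)) (sig L2 u) := by
  have hc : mlc L2 u / mlc L2 v ≠ 0 := div_ne_zero (mlc_ne_zero hu) (mlc_ne_zero hv)
  refine sig_sub_lt_of_mlc_eq hu (hsig.trans (sig_smul L2 hc v).symm) ?_
  rw [mlc_smul hc, div_mul_cancel₀ _ (mlc_ne_zero hv)]

end Signature

section KeyFact

variable {k : Type*} [Field k] {m n : ℕ}

theorem dotf_zero (fvec : Fin m → MvPolynomial (Fin n) k) : dotf fvec 0 = 0 :=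
  zero_dotProduct fvec

theorem dotf_sub_smul (fvec u v : Fin m → MvPolynomial (Fin n) k) (c : k) :
    dotf fvec (u - c • v) = dotf fvec u - c • dotf fvec v :=
  (sub_dotProduct u (c • v) fvec).trans (congrArg _ (smul_dotProduct c v fvec))

/-- Condition 2 of the Key Fact: `G` satisfies the defining property of a labeled Gröbner basis
(`IsLabeledGB`) for the labeled polynomials whose signature lies strictly below `s`. -/
def IsLabeledGBBelow (L1 : LinearOrder (Fin n →₀ ℕ)) (L2 : LinearOrder (Fin m × (Fin n →₀ ℕ)))
    (fvec : Fin m → MvPolynomial (Fin n) k)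
    (G : Set (MvPolynomial (Fin n) k × (Fin m → MvPolynomial (Fin n) k)))
    (s : WithBot (Fin m × (Fin n →₀ ℕ))) : Prop :=
  ∀ (f : MvPolynomial (Fin n) k) (u : Fin m → MvPolynomial (Fin n) k),
    f = dotf fvec u → f ≠ 0 → bslt L2 (sig L2 u) s →
      ∃ hw ∈ G, hw.1 ≠ 0 ∧ ∃ t : Fin n →₀ ℕ,
        WithBot.map (fun β => t + β) (lpp L1 hw.1) = lpp L1 f ∧
        bsle L2 (sig L2 (tsmul t hw.2)) (sig L2 u)

variable {L1 : LinearOrder (Fin n →₀ ℕ)} {L2 : LinearOrder (Fin m × (Fin n →₀ ℕ))}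
  {fvec : Fin m → MvPolynomial (Fin n) k}
  {G : Set (MvPolynomial (Fin n) k × (Fin m → MvPolynomial (Fin n) k))}

theorem IsLabeledGBBelow.reducible_of_lpp_eq {f : MvPolynomial (Fin n) k}
    {u u' : Fin m → MvPolynomial (Fin n) k} (hG : IsLabeledGBBelow L1 L2 fvec G (sig L2 u))
    (hf : f ≠ 0) (hlpp : lpp L1 (dotf fvec u') = lpp L1 f)
    (hsig : bslt L2 (sig L2 u') (sig L2 u)) : Reducible L1 L2 G f u := by
  have hu' : dotf fvec u' ≠ 0 := by rwa [Ne, ← lpp_eq_bot_iff L1, hlpp, lpp_eq_bot_iff]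
  obtain ⟨hw, hwG, hw0, t, ht, hle⟩ := hG _ u' rfl hu' hsig
  exact ⟨hf, hw, hwG, hw0, t, ht.trans hlpp, hle.trans_bslt hsig⟩

theorem IsLabeledGBBelow.reducible_of_lpp_lt {u v : Fin m → MvPolynomial (Fin n) k}
    (hG : IsLabeledGBBelow L1 L2 fvec G (sig L2 u)) (hsig : sig L2 u = sig L2 v)
    (hlt : bslt L1 (lpp L1 (dotf fvec v)) (lpp L1 (dotf fvec u))) :
    Reducible L1 L2 G (dotf fvec u) u := by
  have hf : dotf fvec u ≠ 0 := mt (lpp_eq_bot_iff L1).2 hlt.ne_bot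
  have hu : u ≠ 0 := by
    rintro rfl
    exact hf (dotf_zero fvec)
  have hv : v ≠ 0 := by rwa [Ne, ← sig_eq_bot_iff L2, ← hsig, sig_eq_bot_iff]
  have hc : mlc L2 u / mlc L2 v ≠ 0 := div_ne_zero (mlc_ne_zero hu) (mlc_ne_zero hv)
  refine hG.reducible_of_lpp_eq hf ?_ (sig_sub_smul_lt hu hv hsig)
  rw [dotf_sub_smul]
  exact lpp_sub_eq_left L1 (by rwa [lpp_smul L1 hc])

end KeyFact

theorem key_fact_general {k : Type*} [Field k] {n m : ℕ}
    (L1 : LinearOrder (Fin n →₀ ℕ)) (L2 : LinearOrder (Fin m × (Fin n →₀ ℕ)))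
    (fvec : Fin m → MvPolynomial (Fin n) k)
    (G : Set (MvPolynomial (Fin n) k × (Fin m → MvPolynomial (Fin n) k)))
    {f g : MvPolynomial (Fin n) k} {u v : Fin m → MvPolynomial (Fin n) k}
    (hf : f = dotf fvec u) (hg : g = dotf fvec v) (hsig : sig L2 u = sig L2 v)
    (hfnred : ¬ Reducible L1 L2 G f u) (hgnred : ¬ Reducible L1 L2 G g v)
    (hG : IsLabeledGBBelow L1 L2 fvec G (sig L2 u)) :
    lpp L1 f = lpp L1 g ∧ (f = 0 ↔ g = 0) := by
  subst hf hg
  have hlpp : lpp L1 (dotf fvec u) = lpp L1 (dotf fvec v) := by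
    rcases bslt_trichotomy L1 (lpp L1 (dotf fvec u)) (lpp L1 (dotf fvec v)) with hlt | heq | hgt
    · exact absurd ((hsig ▸ hG).reducible_of_lpp_lt hsig.symm hlt) hgnred
    · exact heq
    · exact absurd (hG.reducible_of_lpp_lt hsig hgt) hfnred
  exact ⟨hlpp, by rw [← lpp_eq_bot_iff L1, hlpp, lpp_eq_bot_iff]⟩

/-- **Key Fact.** Let `G` be a set of labeled polynomials, and let `f^[u]`, `g^[v]` be
labeled polynomials with `u ≠ 0`, `v ≠ 0`, with the same signature, neither of which is
reducible by `G`.  Assume moreover (Condition 2) that for every labeled polynomial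
`f̄^[ū]` with `f̄ ≠ 0` and `s(ū) ≺₂ s(u)` there is `h^[w] ∈ G` with `h ≠ 0`,
`lpp(h) ∣ lpp(f̄)` and `s(x^t w) ⪯₂ s(ū)` where `x^t = lpp(f̄)/lpp(h)`.
Then `lpp(f) = lpp(g)`; in particular `f = 0 ↔ g = 0`. -/
theorem key_fact (k : Type*) [Field k] (n m : ℕ)
    (L1 : LinearOrder (Fin n →₀ ℕ)) (L2 : LinearOrder (Fin m × (Fin n →₀ ℕ)))
    (h1add : ∀ a b c : Fin n →₀ ℕ, L1.lt a b → L1.lt (a + c) (b + c))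
    (h1wf : WellFounded L1.lt)
    (h2add : ∀ (p q : Fin m × (Fin n →₀ ℕ)) (γ : Fin n →₀ ℕ),
      L2.lt p q → L2.lt (p.1, p.2 + γ) (q.1, q.2 + γ))
    (h21 : ∀ (i : Fin m) (α β : Fin n →₀ ℕ), L1.lt α β → L2.lt (i, α) (i, β))
    (fvec : Fin m → MvPolynomial (Fin n) k)
    (G : Set (MvPolynomial (Fin n) k × (Fin m → MvPolynomial (Fin n) k)))
    (hGlabeled : ∀ p ∈ G, p.1 = dotf fvec p.2)
    (f g : MvPolynomial (Fin n) k) (u v : Fin m → MvPolynomial (Fin n) k)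
    (hf : f = dotf fvec u) (hg : g = dotf fvec v)
    (hu : u ≠ 0) (hv : v ≠ 0)
    (hsig : sig L2 u = sig L2 v)
    (hfnred : ¬ Reducible L1 L2 G f u) (hgnred : ¬ Reducible L1 L2 G g v)
    (hC2 : ∀ (f' : MvPolynomial (Fin n) k) (u' : Fin m → MvPolynomial (Fin n) k),
      f' = dotf fvec u' → f' ≠ 0 → bslt L2 (sig L2 u') (sig L2 u) →
      ∃ hw ∈ G, hw.1 ≠ 0 ∧ ∃ t : Fin n →₀ ℕ,
        WithBot.map (fun β => t + β) (lpp L1 hw.1) = lpp L1 f' ∧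
        bsle L2 (sig L2 (tsmul t hw.2)) (sig L2 u')) :
    lpp L1 f = lpp L1 g ∧ (f = 0 ↔ g = 0) :=
  key_fact_general L1 L2 fvec G hf hg hsig hfnred hgnred hC2
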